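/- Let x̃ ∈ L²(Ω, ℝᵐ) and ṽ_1, …, ṽ_p ∈ L²(Ω, ℝⁿ) be zero-mean random vectors with ṽ_1, …, ṽ_p pairwise uncorrelated: E[ṽ_i ṽ_jᵀ] = 0 for i ≠ j. Fix rank bounds η_1, …, η_p, and for each k let β_{k1} ≥ ⋯ ≥ β_{kn} ≥ 0 be the singular values of E_{x̃ ṽ_k}(E_{ṽ_k ṽ_k}^{1/2})^†. Let T*_p be the optimal rank-constrained transform T*_p(ỹ) = Σ_{k=1}^p G_{kη_k}(E_{ṽ_k ṽ_k}^{1/2})^† ṽ_k, where G_{kη_k} is the truncated singular value decomposition of E_{x̃ ṽ_k}(E_{ṽ_k ṽ_k}^{1/2})^† of rank η_k, and let T_KLT be the transform obtained in the same way but using only the single term k = 1 (the Karhunen–Loève transform of rank η_1). Then E[‖x̃ − T*_p(ỹ)‖²] = E[‖x̃ − T_KLT(ỹ)‖²] − Σ_{k=2}^p Σ_{j=1}^{η_k} β_{kj}²; in particular the error of T*_p is no larger than that of the Karhunen–Loève transform. -/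

import Mathlib

/-!
The error is expanded as a quadratic form. Write `w k = G k * Q k * v k`. For `k ≠ l` the vectors
`w k` and `w l` are orthogonal in `L²` because `v k` and `v l` are uncorrelated
(`integral_dot_mulVec` turns inner products into traces). Put `M = E[x vᵀ] Q` for a single index.
Since `S` is symmetric, so is its pseudoinverse `Q`, and `Q` commutes with `S`
(`IsMP.symm_and_comm`); hence `P = Q S` is an orthogonal projection with `M P = M`. Because the
left singular vectors are orthonormal, `M P = M` forces `P` to fix every right singular vector
with nonzero singular value, so also `G P = G` (`truncated_mul_eq`). Consequently
`E⟨w, w⟩ = tr (G P Pᵀ Gᵀ) = tr (G Gᵀ)` and `E⟨x, w⟩ = tr (M Gᵀ)` both equal the sum of the retained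
squared singular values, and by Pythagoras (`integral_sq_sub_sum`) every term `w k` used by a
transform lowers the error `E‖x‖²` by exactly that sum. The two transforms differ by the terms
with `k ≠ 0`.
-/

open MeasureTheory Matrix BigOperators

noncomputable def vmean {Ω : Type*} [MeasurableSpace Ω] {n : ℕ} (μ : Measure Ω)
    (g : Ω → Fin n → ℝ) : Fin n → ℝ :=
  fun i => ∫ ω, g ω i ∂μ

/-- Cross-covariance matrix `𝔼_{gh} = E[g hᵀ] - E[g] E[h]ᵀ`. -/
noncomputable def cov {Ω : Type*} [MeasurableSpace Ω] {m n : ℕ} (μ : Measure Ω)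
    (g : Ω → Fin m → ℝ) (h : Ω → Fin n → ℝ) : Matrix (Fin m) (Fin n) ℝ :=
  Matrix.of fun i j => (∫ ω, g ω i * h ω j ∂μ) - (∫ ω, g ω i ∂μ) * (∫ ω, h ω j ∂μ)

/-- `g ∈ L²(Ω, ℝⁿ)`: measurable with `E[‖g‖²] < ∞`. -/
def MemL2 {Ω : Type*} [MeasurableSpace Ω] {n : ℕ} (μ : Measure Ω)
    (g : Ω → Fin n → ℝ) : Prop :=
  Measurable g ∧ Integrable (fun ω => ∑ i, (g ω i) ^ 2) μ

/-- `P` is the Moore–Penrose pseudoinverse of `M`. -/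
def IsMP {m n : ℕ} (M : Matrix (Fin m) (Fin n) ℝ) (P : Matrix (Fin n) (Fin m) ℝ) : Prop :=
  M * P * M = M ∧ P * M * P = P ∧ (M * P)ᵀ = M * P ∧ (P * M)ᵀ = P * M

/-- Raw (uncentered) second-moment matrix `E_{gh} = E[g hᵀ]` (for zero-mean vectors this
is the covariance matrix). -/
noncomputable def rcov {Ω : Type*} [MeasurableSpace Ω] {m n : ℕ} (μ : Measure Ω)
    (g : Ω → Fin m → ℝ) (h : Ω → Fin n → ℝ) : Matrix (Fin m) (Fin n) ℝ :=
  Matrix.of fun i j => ∫ ω, g ω i * h ω j ∂μ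

/-- The pseudoinverse of a symmetric matrix is symmetric and commutes with it. -/
lemma IsMP.symm_and_comm {n : ℕ} {S Q : Matrix (Fin n) (Fin n) ℝ} (hS : Sᵀ = S)
    (h : IsMP S Q) : Qᵀ = Q ∧ Q * S = S * Q := by
  obtain ⟨h1, h2, h3, h4⟩ := h
  rw [transpose_mul, hS] at h3 h4
  -- `h3 : Qᵀ * S = S * Q` and `h4 : S * Qᵀ = Q * S`
  have h1' : S * Qᵀ * S = S := by
    have := congrArg transpose h1
    simpa [transpose_mul, hS, Matrix.mul_assoc] using this
  have e1 : S * Q = (Q * S) * (S * Q) := by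
    rw [← h4, ← Matrix.mul_assoc, h1']
  have e2 : Q * S = S * Q := by
    have := congrArg transpose e1
    simp only [transpose_mul, hS] at this
    rw [h3, h4] at this
    calc Q * S = S * Q * S * Qᵀ := by rw [h1, h4]
      _ = S * Q * (Q * S) := by rw [Matrix.mul_assoc, h4]
      _ = S * Q := this.symm
  refine ⟨?_, e2⟩
  have h2' : Qᵀ * S * Qᵀ = Qᵀ := by
    have := congrArg transpose h2
    simpa [transpose_mul, hS, Matrix.mul_assoc] using this
  calc Qᵀ = Qᵀ * S * Qᵀ := h2'.symm
    _ = S * Q * Qᵀ := by rw [h3]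
    _ = Q * (S * Qᵀ) := by rw [← e2, Matrix.mul_assoc]
    _ = Q * S * Q := by rw [h4, ← Matrix.mul_assoc, Matrix.mul_assoc Q S Q, ← e2, Matrix.mul_assoc]
    _ = Q := h2

/-- If a singular value expansion is unchanged by right multiplication by `P`, so is each of its
partial sums: testing against the orthonormal left vectors isolates a single term. -/
lemma truncated_mul_eq {m n : ℕ} (P : Matrix (Fin n) (Fin n) ℝ)
    (s : Fin n → Fin m → ℝ) (d : Fin n → Fin n → ℝ) (β : Fin n → ℝ)
    (hs : ∀ j j', ∑ a, s j a * s j' a = if j = j' then (1 : ℝ) else 0)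
    (hP : (∑ j, β j • vecMulVec (s j) (d j)) * P = ∑ j, β j • vecMulVec (s j) (d j))
    (J : Finset (Fin n)) :
    (∑ j ∈ J, β j • vecMulVec (s j) (d j)) * P = ∑ j ∈ J, β j • vecMulVec (s j) (d j) := by
  have key : ∀ j, β j • (d j ᵥ* P) = β j • d j := by
    intro j
    have hs' : ∀ j', s j ⬝ᵥ s j' = if j = j' then (1 : ℝ) else 0 := fun j' => hs j j'
    have := congrArg (fun M => s j ᵥ* M) hP
    simpa [Finset.sum_mul, Matrix.sum_mul, vecMulVec_mul, vecMul_sum, vecMul_smul,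
      vecMul_vecMulVec, hs', ite_smul] using this
  rw [Matrix.sum_mul]
  refine Finset.sum_congr rfl fun j _ => ?_
  rw [Matrix.smul_mul, vecMulVec_mul, ← vecMulVec_smul, key, vecMulVec_smul]

lemma trace_truncated {m n : ℕ}
    (s : Fin n → Fin m → ℝ) (d : Fin n → Fin n → ℝ) (β : Fin n → ℝ)
    (hs : ∀ j j', ∑ a, s j a * s j' a = if j = j' then (1 : ℝ) else 0)
    (hd : ∀ j j', ∑ a, d j a * d j' a = if j = j' then (1 : ℝ) else 0)
    (I J : Finset (Fin n)) (hJI : J ⊆ I) :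
    ((∑ j ∈ I, β j • vecMulVec (s j) (d j)) *
      (∑ j ∈ J, β j • vecMulVec (s j) (d j))ᵀ).trace = ∑ j ∈ J, β j ^ 2 := by
  have hs' : ∀ j j', s j ⬝ᵥ s j' = if j = j' then (1 : ℝ) else 0 := hs
  have hd' : ∀ j j', d j ⬝ᵥ d j' = if j = j' then (1 : ℝ) else 0 := hd
  rw [transpose_sum, Matrix.mul_sum, trace_sum]
  refine Finset.sum_congr rfl fun j hj => ?_
  rw [Matrix.sum_mul, trace_sum, Finset.sum_eq_single_of_mem j (hJI hj)]
  · simp [transpose_smul, transpose_vecMulVec, vecMulVec_mul_vecMulVec, trace_vecMulVec,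
      hs', hd', sq]
  · intro b _ hb
    simp [transpose_smul, transpose_vecMulVec, vecMulVec_mul_vecMulVec, hd', hb]

lemma MemL2.memLp {Ω : Type*} [MeasurableSpace Ω] {μ : Measure Ω} {n : ℕ}
    {g : Ω → Fin n → ℝ} (hg : MemL2 μ g) (i : Fin n) : MemLp (fun ω => g ω i) 2 μ := by
  have hm : Measurable (fun ω => g ω i) := (measurable_pi_apply i).comp hg.1
  rw [memLp_two_iff_integrable_sq hm.aestronglyMeasurable]
  refine hg.2.mono' (hm.pow_const 2).aestronglyMeasurable (.of_forall fun ω => ?_)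
  rw [Real.norm_of_nonneg (sq_nonneg _)]
  exact Finset.single_le_sum (f := fun i => g ω i ^ 2) (fun i _ => sq_nonneg _)
    (Finset.mem_univ i)

lemma MemL2.memLp_mulVec {Ω : Type*} [MeasurableSpace Ω] {μ : Measure Ω} {m n : ℕ}
    {g : Ω → Fin n → ℝ} (hg : MemL2 μ g) (A : Matrix (Fin m) (Fin n) ℝ) (i : Fin m) :
    MemLp (fun ω => (A *ᵥ g ω) i) 2 μ := by
  simp only [mulVec, dotProduct]
  exact memLp_finsetSum _ fun j _ => (hg.memLp j).const_mul _

lemma integral_dot_mulVec {Ω : Type*} [MeasurableSpace Ω] {μ : Measure Ω} {l m n : ℕ}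
    {u : Ω → Fin m → ℝ} {w : Ω → Fin n → ℝ} (hu : MemL2 μ u) (hw : MemL2 μ w)
    (A : Matrix (Fin l) (Fin m) ℝ) (B : Matrix (Fin l) (Fin n) ℝ) :
    ∑ i, ∫ ω, (A *ᵥ u ω) i * (B *ᵥ w ω) i ∂μ = (A * rcov μ u w * Bᵀ).trace := by
  rw [trace]
  refine Finset.sum_congr rfl fun i _ => ?_
  have hint : ∀ a b, Integrable (fun ω => u ω a * w ω b) μ := fun a b =>
    (hu.memLp a).integrable_mul (hw.memLp b)
  have e : ∀ ω, (A *ᵥ u ω) i * (B *ᵥ w ω) i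
      = ∑ b, ∑ a, A i a * B i b * (u ω a * w ω b) := by
    intro ω
    simp only [mulVec, dotProduct, Finset.sum_mul_sum]
    rw [Finset.sum_comm]
    exact Finset.sum_congr rfl fun b _ => Finset.sum_congr rfl fun a _ => by ring
  simp_rw [e]
  rw [integral_finsetSum _ fun b _ => integrable_finsetSum _ fun a _ => (hint a b).const_mul _]
  simp only [diag_apply, Matrix.mul_apply, transpose_apply, Finset.sum_mul]
  refine Finset.sum_congr rfl fun b _ => ?_
  rw [integral_finsetSum _ fun a _ => (hint a b).const_mul _]
  refine Finset.sum_congr rfl fun a _ => ?_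
  rw [integral_const_mul, rcov, of_apply]
  ring

/-- Pythagoras: subtracting from `x` pairwise orthogonal vectors `w k`, each with
`E⟨x, w k⟩ = E⟨w k, w k⟩ = c k`, lowers `E‖x‖²` by `∑ c k`. -/
lemma integral_sq_sub_sum {Ω : Type*} [MeasurableSpace Ω] {μ : Measure Ω} {m p : ℕ}
    {x : Ω → Fin m → ℝ} (hx : ∀ i, MemLp (fun ω => x ω i) 2 μ)
    {w : Fin p → Ω → Fin m → ℝ} (hw : ∀ k i, MemLp (fun ω => w k ω i) 2 μ) (c : Fin p → ℝ)
    (hxw : ∀ k, ∑ i, ∫ ω, x ω i * w k ω i ∂μ = c k)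
    (hww : ∀ k l, ∑ i, ∫ ω, w k ω i * w l ω i ∂μ = if k = l then c k else 0)
    (K : Finset (Fin p)) :
    ∫ ω, ∑ i, (x ω i - ∑ k ∈ K, w k ω i) ^ 2 ∂μ
      = (∑ i, ∫ ω, x ω i ^ 2 ∂μ) - ∑ k ∈ K, c k := by
  have hsum : ∀ i, MemLp (fun ω => ∑ k ∈ K, w k ω i) 2 μ := fun i =>
    memLp_finsetSum _ fun k _ => hw k i
  have hsq : ∀ i, Integrable (fun ω => (x ω i - ∑ k ∈ K, w k ω i) ^ 2) μ := fun i =>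
    ((hx i).sub (hsum i)).integrable_sq
  rw [integral_finsetSum _ fun i _ => hsq i]
  have e : ∀ i, ∫ ω, (x ω i - ∑ k ∈ K, w k ω i) ^ 2 ∂μ
      = ∫ ω, x ω i ^ 2 ∂μ - 2 * (∑ k ∈ K, ∫ ω, x ω i * w k ω i ∂μ)
        + ∑ k ∈ K, ∑ l ∈ K, ∫ ω, w k ω i * w l ω i ∂μ := by
    intro i
    have h1 : Integrable (fun ω => x ω i ^ 2) μ := (hx i).integrable_sq
    have h2 : ∀ k, Integrable (fun ω => x ω i * w k ω i) μ := fun k =>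
      (hx i).integrable_mul (hw k i)
    have h3 : ∀ k l, Integrable (fun ω => w k ω i * w l ω i) μ := fun k l =>
      (hw k i).integrable_mul (hw l i)
    have h2s : Integrable (fun ω => 2 * ∑ k ∈ K, x ω i * w k ω i) μ :=
      (integrable_finsetSum _ fun k _ => h2 k).const_mul 2
    have h3s : Integrable (fun ω => ∑ k ∈ K, ∑ l ∈ K, w k ω i * w l ω i) μ :=
      integrable_finsetSum _ fun k _ => integrable_finsetSum _ fun l _ => h3 k l
    have h12 : Integrable (fun ω => x ω i ^ 2 - 2 * ∑ k ∈ K, x ω i * w k ω i) μ := h1.sub h2s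
    have e' : ∀ ω, (x ω i - ∑ k ∈ K, w k ω i) ^ 2
        = x ω i ^ 2 - 2 * (∑ k ∈ K, x ω i * w k ω i)
          + ∑ k ∈ K, ∑ l ∈ K, w k ω i * w l ω i := by
      intro ω
      rw [← Finset.mul_sum, ← Finset.sum_mul_sum]
      ring
    simp_rw [e']
    rw [integral_add h12 h3s, integral_sub h1 h2s, integral_const_mul,
      integral_finsetSum _ fun k _ => h2 k,
      integral_finsetSum _ fun k _ => integrable_finsetSum _ fun l _ => h3 k l]
    congr 1
    exact Finset.sum_congr rfl fun k _ => integral_finsetSum _ fun l _ => h3 k l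
  simp_rw [e]
  rw [Finset.sum_add_distrib, Finset.sum_sub_distrib, ← Finset.mul_sum, Finset.sum_comm]
  have e2 : ∑ i, ∑ k ∈ K, ∑ l ∈ K, ∫ ω, w k ω i * w l ω i ∂μ = ∑ k ∈ K, c k := by
    rw [Finset.sum_comm]
    refine Finset.sum_congr rfl fun k hk => ?_
    rw [Finset.sum_comm]
    simp [hww, hk]
  rw [e2]
  simp_rw [hxw]
  ring

theorem better_than_KLT
    {Ω : Type*} [MeasurableSpace Ω] (μ : Measure Ω) [IsProbabilityMeasure μ]
    {m n p : ℕ} [NeZero p] (x : Ω → Fin m → ℝ) (hx : MemL2 μ x)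
    (hx0 : vmean μ x = 0)
    (v : Fin p → Ω → Fin n → ℝ) (hv : ∀ k, MemL2 μ (v k))
    (hv0 : ∀ k, vmean μ (v k) = 0)
    (horth : ∀ i j, i ≠ j → rcov μ (v i) (v j) = 0)
    (S : Fin p → Matrix (Fin n) (Fin n) ℝ)
    (hSpsd : ∀ k, (S k).PosSemidef)
    (hSsq : ∀ k, S k * S k = rcov μ (v k) (v k))
    (Q : Fin p → Matrix (Fin n) (Fin n) ℝ)
    (hQ : ∀ k, IsMP (S k) (Q k))
    (η : Fin p → ℕ)
    (s : Fin p → Fin n → Fin m → ℝ) (d : Fin p → Fin n → Fin n → ℝ)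
    (β : Fin p → Fin n → ℝ)
    (hs : ∀ k j j', ∑ a, s k j a * s k j' a = if j = j' then (1 : ℝ) else 0)
    (hd : ∀ k j j', ∑ a, d k j a * d k j' a = if j = j' then (1 : ℝ) else 0)
    (hmono : ∀ k, Antitone (β k)) (hpos : ∀ k j, 0 ≤ β k j)
    (hsvd : ∀ k, rcov μ x (v k) * Q k = ∑ j, β k j • Matrix.vecMulVec (s k j) (d k j))
    (G : Fin p → Matrix (Fin m) (Fin n) ℝ)
    (hG : ∀ k, G k = ∑ j ∈ Finset.univ.filter (fun j : Fin n => (j : ℕ) < η k),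
        β k j • Matrix.vecMulVec (s k j) (d k j)) :
    (∫ ω, ∑ i, (x ω i - ∑ k, (G k * Q k).mulVec (v k ω) i) ^ 2 ∂μ)
      = (∫ ω, ∑ i, (x ω i - (G 0 * Q 0).mulVec (v 0 ω) i) ^ 2 ∂μ)
        - ∑ k ∈ Finset.univ.filter (fun k : Fin p => k ≠ 0),
            ∑ j ∈ Finset.univ.filter (fun j : Fin n => (j : ℕ) < η k), (β k j) ^ 2 ∧
    (∫ ω, ∑ i, (x ω i - ∑ k, (G k * Q k).mulVec (v k ω) i) ^ 2 ∂μ)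
      ≤ (∫ ω, ∑ i, (x ω i - (G 0 * Q 0).mulVec (v 0 ω) i) ^ 2 ∂μ) := by
  classical
  set J : Fin p → Finset (Fin n) :=
    fun k => Finset.univ.filter (fun j : Fin n => (j : ℕ) < η k) with hJ
  set c : Fin p → ℝ := fun k => ∑ j ∈ J k, β k j ^ 2 with hc
  have hST : ∀ k, (S k)ᵀ = S k := fun k => by
    simpa using (hSpsd k).isHermitian.eq
  have hQT : ∀ k, (Q k)ᵀ = Q k := fun k => ((hQ k).symm_and_comm (hST k)).1
  have hQS : ∀ k, Q k * S k = S k * Q k := fun k => ((hQ k).symm_and_comm (hST k)).2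
  have hGP : ∀ k, G k * (Q k * S k) = G k := by
    intro k
    rw [hG k]
    refine truncated_mul_eq _ _ _ _ (hs k) ?_ _
    rw [← hsvd k, Matrix.mul_assoc, hQS, ← Matrix.mul_assoc (Q k), (hQ k).2.1]
  have hxw : ∀ k, ∑ i, ∫ ω, x ω i * ((G k * Q k) *ᵥ v k ω) i ∂μ = c k := by
    intro k
    have h := integral_dot_mulVec hx (hv k) 1 (G k * Q k)
    simp only [one_mulVec, Matrix.one_mul] at h
    rw [h, transpose_mul, hQT, ← Matrix.mul_assoc, hsvd, hG k]
    exact trace_truncated _ _ _ (hs k) (hd k) _ _ (Finset.subset_univ _)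
  have hww : ∀ k l, ∑ i, ∫ ω, ((G k * Q k) *ᵥ v k ω) i * ((G l * Q l) *ᵥ v l ω) i ∂μ
      = if k = l then c k else 0 := by
    intro k l
    rw [integral_dot_mulVec (hv k) (hv l)]
    split_ifs with hkl
    · subst hkl
      have : G k * Q k * rcov μ (v k) (v k) * (G k * Q k)ᵀ = G k * (G k)ᵀ := by
        rw [← hSsq, transpose_mul, hQT]
        calc G k * Q k * (S k * S k) * (Q k * (G k)ᵀ)
            = G k * (Q k * S k) * (S k * Q k) * (G k)ᵀ := by simp only [Matrix.mul_assoc]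
          _ = G k * (G k)ᵀ := by rw [hGP, ← hQS, hGP]
      rw [this, hG k]
      exact trace_truncated _ _ _ (hs k) (hd k) _ _ subset_rfl
    · simp [horth k l hkl]
  have main := integral_sq_sub_sum hx.memLp (fun k i => (hv k).memLp_mulVec (G k * Q k) i) c
    hxw hww
  have h1 := main Finset.univ
  have h0 := main {0}
  simp only [Finset.sum_singleton] at h0
  have hsplit : ∑ k, c k = c 0 + ∑ k ∈ Finset.univ.filter (fun k : Fin p => k ≠ 0), c k := by
    rw [Finset.filter_ne', Finset.add_sum_erase _ _ (Finset.mem_univ _)]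
  have hnn : 0 ≤ ∑ k ∈ Finset.univ.filter (fun k : Fin p => k ≠ 0), c k :=
    Finset.sum_nonneg fun k _ => Finset.sum_nonneg fun j _ => sq_nonneg _
  rw [h1, h0]
  constructor <;> linarith
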